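/- arXiv:1410.8229 — 3 statements merged into one kernel-verified Lean document; each statement's English description precedes it below -/
import Mathlib

section
/- Let m, n, k be positive integers, let A ∈ ℝ^{m×n}, and let μ ∈ (0,1). Suppose there exist constants D₁ and D₂ such that for every ε ≥ 0, every x ∈ ℝⁿ, and every η ∈ ℝᵐ with ‖η‖₂ ≤ ε, every minimizer x̂ of the function z ↦ μ‖z‖₁ + (1−μ)‖z‖₂² over the set {z ∈ ℝⁿ : ‖(Ax+η) − Az‖₂ ≤ ε} satisfies ‖x̂ − x‖₂ ≤ D₁·σ_k(x, ‖·‖₁) + D₂·ε. Then m ≥ n/4. -/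
/-- The ℓ¹-norm of a vector in ℝⁿ. -/
noncomputable def l1 {n : ℕ} (x : Fin n → ℝ) : ℝ := ∑ i, |x i|

/-- The ℓ²-norm of a vector in ℝⁿ. -/
noncomputable def l2 {n : ℕ} (x : Fin n → ℝ) : ℝ := Real.sqrt (∑ i, (x i) ^ 2)

/-- The ℓᵖ-norm of a vector in ℝⁿ. -/
noncomputable def lpNorm {n : ℕ} (p : ℝ) (x : Fin n → ℝ) : ℝ := (∑ i, |x i| ^ p) ^ (1 / p)

/-- A vector is `k`-sparse if it has at most `k` nonzero components. -/
def IsSparse {n : ℕ} (k : ℕ) (x : Fin n → ℝ) : Prop :=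
  (Finset.univ.filter (fun i => x i ≠ 0)).card ≤ k

/-- The `k`-sparsity index of `x` with respect to the ℓ¹-norm. -/
noncomputable def sigma1 {n : ℕ} (k : ℕ) (x : Fin n → ℝ) : ℝ :=
  sInf ((fun z => l1 (x - z)) '' {z | IsSparse k z})

/-- The `k`-sparsity index of `x` with respect to the ℓ²-norm. -/
noncomputable def sigma2 {n : ℕ} (k : ℕ) (x : Fin n → ℝ) : ℝ :=
  sInf ((fun z => l2 (x - z)) '' {z | IsSparse k z})

/-- The vector agreeing with `x` on `S` and zero elsewhere. -/
def proj {n : ℕ} (S : Finset (Fin n)) (x : Fin n → ℝ) : Fin n → ℝ :=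
  fun i => if i ∈ S then x i else 0

/-- `G` is a partition of `{1,…,n}` into `g` disjoint nonempty subsets. -/
def IsPartition {n g : ℕ} (G : Fin g → Finset (Fin n)) : Prop :=
  (∀ i, (G i).Nonempty) ∧ (∀ i j, i ≠ j → Disjoint (G i) (G j)) ∧
    (∀ x : Fin n, ∃ i, x ∈ G i)

/-- The Sparse Group LASSO norm associated to the partition `G` with parameter `μ`. -/
noncomputable def sglNorm {n g : ℕ} (G : Fin g → Finset (Fin n)) (μ : ℝ) (z : Fin n → ℝ) : ℝ :=
  ∑ i, ((1 - μ) * l1 (proj (G i) z) + μ * l2 (proj (G i) z))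

/-- `A` satisfies the Restricted Isometry Property of order `k` with constant `δ`. -/
def RIP {m n : ℕ} (A : Matrix (Fin m) (Fin n) ℝ) (k : ℕ) (δ : ℝ) : Prop :=
  ∀ u : Fin n → ℝ, IsSparse k u →
    (1 - δ) * (l2 u) ^ 2 ≤ (l2 (A.mulVec u)) ^ 2 ∧
      (l2 (A.mulVec u)) ^ 2 ≤ (1 + δ) * (l2 u) ^ 2

/-- `A` satisfies the ℓ₂ robust null space property of order `k` with constants `ρ`, `τ`. -/
def RNSP {m n : ℕ} (A : Matrix (Fin m) (Fin n) ℝ) (k : ℕ) (ρ τ : ℝ) : Prop :=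
  ∀ h : Fin n → ℝ, ∀ S : Finset (Fin n), S.card ≤ k →
    l2 (proj S h) ≤ (ρ / Real.sqrt k) * l1 (proj Sᶜ h) +
      (τ / Real.sqrt k) * l2 (A.mulVec h)

/-!
The theorem holds with `n` in place of `n / 4`. The quadratic term makes the regularizer coercive,
so every fibre of `A` contains a minimizer, and exact recovery forces each sparse `x` to be that
minimizer. But the quadratic term also outgrows the `ℓ¹` term: if `A h = 0` with `h i ≠ 0`, then for
a suitable large multiple `x` of the `i`-th basis vector the cross term `2 ⟨x, h⟩` makes `x + h`
strictly cheaper than `x`. Hence `A` is injective.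
-/

open Filter Matrix

/-- The Elastic Net regularizer `μ‖z‖₁ + (1 - μ)‖z‖₂²`, for an arbitrary real weight `μ`. -/
noncomputable def elasticNet {n : ℕ} (μ : ℝ) (z : Fin n → ℝ) : ℝ :=
  μ * l1 z + (1 - μ) * l2 z ^ 2

/-- Exact noiseless recovery of sparse vectors: the regularizer `R`, minimized over all vectors with
the same measurements as a `k`-sparse `x`, has no minimizer other than `x`. The existence of a
minimizer is not part of the notion. -/
def RecoversSparse {ι : Type*} {n : ℕ} (k : ℕ) (A : Matrix ι (Fin n) ℝ)
    (R : (Fin n → ℝ) → ℝ) : Prop :=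
  ∀ x, IsSparse k x → ∀ y, A *ᵥ y = A *ᵥ x → IsMinOn R {z | A *ᵥ z = A *ᵥ x} y → y = x

section Norms

variable {n : ℕ}

lemma l1_nonneg (x : Fin n → ℝ) : 0 ≤ l1 x :=
  Finset.sum_nonneg fun _ _ => abs_nonneg _

lemma abs_l1_add_sub_l1_le (x h : Fin n → ℝ) : |l1 (x + h) - l1 x| ≤ l1 h := by
  unfold l1
  rw [← Finset.sum_sub_distrib]
  refine (Finset.abs_sum_le_sum_abs _ _).trans (Finset.sum_le_sum fun i _ => ?_)
  simpa using abs_abs_sub_abs_le (x i + h i) (x i)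

lemma l1_le_mul_norm (x : Fin n → ℝ) : l1 x ≤ n * ‖x‖ := by
  simpa [l1] using Finset.sum_le_card_nsmul Finset.univ (fun i => |x i|) ‖x‖
    fun i _ => norm_le_pi_norm x i

lemma l2_sq_eq_dotProduct (x : Fin n → ℝ) : l2 x ^ 2 = x ⬝ᵥ x := by
  simp only [l2, dotProduct, ← sq]
  exact Real.sq_sqrt (Finset.sum_nonneg fun i _ => sq_nonneg _)

lemma l2_le_zero_iff {x : Fin n → ℝ} : l2 x ≤ 0 ↔ x = 0 := by
  rw [← dotProduct_self_eq_zero, ← l2_sq_eq_dotProduct, sq_eq_zero_iff]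
  exact (Real.sqrt_nonneg _).ge_iff_eq'

lemma l2_add_sq (x h : Fin n → ℝ) : l2 (x + h) ^ 2 = l2 x ^ 2 + 2 * (x ⬝ᵥ h) + l2 h ^ 2 := by
  simp only [l2_sq_eq_dotProduct, add_dotProduct, dotProduct_add, dotProduct_comm h x]
  ring

lemma norm_le_l2 (x : Fin n → ℝ) : ‖x‖ ≤ l2 x :=
  (pi_norm_le_iff_of_nonneg (Real.sqrt_nonneg _)).2 fun i => Real.abs_le_sqrt <|
    Finset.single_le_sum (f := fun j => x j ^ 2) (fun _ _ => sq_nonneg _) (Finset.mem_univ i)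

end Norms

section Sparsity

variable {n k : ℕ}

lemma isSparse_single (hk : 0 < k) (i : Fin n) (c : ℝ) : IsSparse k (Pi.single i c) := by
  have hsupp : Finset.univ.filter (fun j => (Pi.single i c : Fin n → ℝ) j ≠ 0) ⊆ {i} := by
    intro j hj
    by_contra hji
    simp_all
  exact (Finset.card_le_card hsupp).trans hk

lemma sigma1_eq_zero {x : Fin n → ℝ} (hx : IsSparse k x) : sigma1 k x = 0 :=
  IsLeast.csInf_eq
    ⟨⟨x, hx, by simp [l1]⟩, Set.forall_mem_image.2 fun z _ => l1_nonneg (x - z)⟩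

end Sparsity

section ElasticNet

variable {n : ℕ} {μ : ℝ}

lemma continuous_elasticNet : Continuous (elasticNet μ : (Fin n → ℝ) → ℝ) := by
  unfold elasticNet l1 l2
  fun_prop

lemma le_elasticNet (hμ : μ ≤ 1) (z : Fin n → ℝ) :
    ‖z‖ * ((1 - μ) * ‖z‖ - |μ| * n) ≤ elasticNet μ z := by
  have hl1 : -(|μ| * (n * ‖z‖)) ≤ μ * l1 z := by
    refine neg_le_of_abs_le ?_
    rw [abs_mul, abs_of_nonneg (l1_nonneg z)]
    gcongr
    exact l1_le_mul_norm z
  have hl2 : (1 - μ) * ‖z‖ ^ 2 ≤ (1 - μ) * l2 z ^ 2 := by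
    have := sub_nonneg.2 hμ
    gcongr
    exact norm_le_l2 z
  unfold elasticNet
  linarith

lemma tendsto_elasticNet_cocompact_atTop (hμ : μ < 1) :
    Tendsto (elasticNet μ) (cocompact (Fin n → ℝ)) atTop := by
  refine tendsto_atTop_mono (le_elasticNet hμ.le) ?_
  have hnorm := tendsto_norm_cocompact_atTop (E := Fin n → ℝ)
  exact hnorm.atTop_mul_atTop₀
    (tendsto_atTop_add_const_right _ _ (hnorm.const_mul_atTop (sub_pos.2 hμ)))

lemma elasticNet_add_le (x h : Fin n → ℝ) :
    elasticNet μ (x + h) ≤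
      elasticNet μ x + 2 * (1 - μ) * (x ⬝ᵥ h) + (|μ| * l1 h + (1 - μ) * l2 h ^ 2) := by
  have hl1 : μ * (l1 (x + h) - l1 x) ≤ |μ| * l1 h := by
    refine (le_abs_self _).trans ?_
    rw [abs_mul]
    gcongr
    exact abs_l1_add_sub_l1_le x h
  simp only [elasticNet, l2_add_sq]
  linarith

lemma exists_elasticNet_single_add_lt (hμ : μ < 1) {h : Fin n → ℝ} (hh : h ≠ 0) :
    ∃ i c, elasticNet μ (Pi.single i c + h) < elasticNet μ (Pi.single i c) := by
  obtain ⟨i, hi : h i ≠ 0⟩ := Function.ne_iff.1 hh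
  set B := |μ| * l1 h + (1 - μ) * l2 h ^ 2
  have hμ' : 1 - μ ≠ 0 := (sub_pos.2 hμ).ne'
  refine ⟨i, -(B + 1) / (2 * (1 - μ) * h i), ?_⟩
  set x : Fin n → ℝ := Pi.single i (-(B + 1) / (2 * (1 - μ) * h i))
  have hcross : 2 * (1 - μ) * (x ⬝ᵥ h) = -(B + 1) := by
    rw [single_dotProduct]
    field_simp
  calc
    elasticNet μ (x + h) ≤ elasticNet μ x + 2 * (1 - μ) * (x ⬝ᵥ h) + B := elasticNet_add_le x h
    _ < elasticNet μ x := by linarith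

end ElasticNet

section Recovery

variable {ι : Type*} {n k : ℕ}

lemma RecoversSparse.isMinOn {A : Matrix ι (Fin n) ℝ} {R : (Fin n → ℝ) → ℝ}
    (hrec : RecoversSparse k A R) (hcont : Continuous R)
    (hcoercive : Tendsto R (cocompact _) atTop) {x : Fin n → ℝ} (hx : IsSparse k x) :
    IsMinOn R {z | A *ᵥ z = A *ᵥ x} x := by
  have hclosed : IsClosed {z | A *ᵥ z = A *ᵥ x} := isClosed_eq (by fun_prop) continuous_const
  obtain ⟨y, hy, hmin⟩ := hcont.continuousOn.exists_isMinOn' hclosed (x₀ := x) rfl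
    ((hcoercive.eventually_ge_atTop (R x)).filter_mono inf_le_left)
  rwa [hrec x hx y hy hmin] at hmin

lemma recoversSparse_of_robust_recovery {m : ℕ} {A : Matrix (Fin m) (Fin n) ℝ}
    {R : (Fin n → ℝ) → ℝ}
    (hrec : ∃ D₁ D₂ : ℝ, ∀ ε : ℝ, 0 ≤ ε → ∀ x : Fin n → ℝ, ∀ η : Fin m → ℝ,
      l2 η ≤ ε → ∀ xh : Fin n → ℝ,
      (l2 (A *ᵥ x + η - A *ᵥ xh) ≤ ε ∧
        ∀ z : Fin n → ℝ, l2 (A *ᵥ x + η - A *ᵥ z) ≤ ε → R xh ≤ R z) →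
      l2 (xh - x) ≤ D₁ * sigma1 k x + D₂ * ε) :
    RecoversSparse k A R := by
  obtain ⟨D₁, D₂, hrec⟩ := hrec
  intro x hx y hy hmin
  have hfeasible (z : Fin n → ℝ) : l2 (A *ᵥ x + 0 - A *ᵥ z) ≤ 0 ↔ A *ᵥ z = A *ᵥ x := by
    rw [l2_le_zero_iff, add_zero, sub_eq_zero, eq_comm]
  have herr := hrec 0 le_rfl x 0 (l2_le_zero_iff.2 rfl) y
    ⟨(hfeasible y).2 hy, fun z hz => hmin ((hfeasible z).1 hz)⟩
  rw [sigma1_eq_zero hx, mul_zero, mul_zero, add_zero, l2_le_zero_iff] at herr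
  exact sub_eq_zero.1 herr

theorem stmt0_general (hk : 0 < k) (A : Matrix ι (Fin n) ℝ) {μ : ℝ} (hμ : μ < 1)
    (hrec : RecoversSparse k A (elasticNet μ)) : Function.Injective A.mulVec := by
  refine (injective_iff_map_eq_zero A.mulVecLin).2 fun h hAh => ?_
  by_contra hh
  obtain ⟨i, c, hlt⟩ := exists_elasticNet_single_add_lt hμ hh
  have hmin := hrec.isMinOn continuous_elasticNet (tendsto_elasticNet_cocompact_atTop hμ)
    (isSparse_single hk i c)
  have hfibre : A *ᵥ (Pi.single i c + h) = A *ᵥ Pi.single i c := by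
    rw [mulVec_add, show A *ᵥ h = 0 from hAh, add_zero]
  exact hlt.not_ge (hmin hfibre)

end Recovery

/-- If the Elastic Net decoder achieves robust sparse recovery of order `k`
for the matrix `A`, then `m ≥ n/4`. -/
theorem stmt0 (m n k : ℕ) (hm : 0 < m) (hn : 0 < n) (hk : 0 < k)
    (A : Matrix (Fin m) (Fin n) ℝ) (μ : ℝ) (hμ : μ ∈ Set.Ioo (0 : ℝ) 1)
    (hrec : ∃ D₁ D₂ : ℝ, ∀ ε : ℝ, 0 ≤ ε → ∀ x : Fin n → ℝ, ∀ η : Fin m → ℝ,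
      l2 η ≤ ε → ∀ xh : Fin n → ℝ,
        (l2 (A.mulVec x + η - A.mulVec xh) ≤ ε ∧
          ∀ z : Fin n → ℝ, l2 (A.mulVec x + η - A.mulVec z) ≤ ε →
            μ * l1 xh + (1 - μ) * (l2 xh) ^ 2 ≤ μ * l1 z + (1 - μ) * (l2 z) ^ 2) →
        l2 (xh - x) ≤ D₁ * sigma1 k x + D₂ * ε) :
    (n : ℝ) / 4 ≤ (m : ℝ) := by
  have hnm : n ≤ m := le_of_fin_injective ℝ A.mulVecLin
    (stmt0_general hk A hμ.2 (recoversSparse_of_robust_recovery hrec))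
  linarith [n.cast_nonneg (α := ℝ), (Nat.cast_le (α := ℝ)).2 hnm]
end

section
/- Let m, n, k be positive integers, A ∈ ℝ^{m×n}, and μ ∈ (0,1). Suppose that for every k-sparse x ∈ ℝⁿ and every z ∈ ℝⁿ with Az = Ax, one has μ‖x‖₁ + (1−μ)‖x‖₂² ≤ μ‖z‖₁ + (1−μ)‖z‖₂². Then for every h in the null space of A and every index set Λ ⊆ {1,…,n} with |Λ| ≤ k, one has ‖h_Λ‖₂ ≤ ‖h_{Λᶜ}‖₂, where h_Λ denotes the vector that agrees with h on Λ and is zero outside Λ, and Λᶜ is the complement of Λ. -/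
/-!
Split `h ∈ ker A` as `h_Λ + h_{Λᶜ}`. For every `t > 0` the sparse vector `t • h_Λ` competes with
`-t • h_{Λᶜ}` in the same fiber of `A`. The `ℓ¹`-terms grow linearly in `t` and the `ℓ²`-terms
quadratically, so letting `t → ∞` leaves the comparison of the `ℓ²`-norms alone.
-/

theorem le_of_forall_pos_mul_add_sq_mul_le {𝕜 : Type*} [Field 𝕜] [LinearOrder 𝕜]
    [IsStrictOrderedRing 𝕜] {a b c d : 𝕜}
    (hle : ∀ t : 𝕜, 0 < t → t * a + t ^ 2 * b ≤ t * c + t ^ 2 * d) : b ≤ d := by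
  by_contra! hdb
  have hgap : 0 < b - d := sub_pos.2 hdb
  have linear_bound (t : 𝕜) (ht : 0 < t) : t * (b - d) ≤ c - a := by
    refine le_of_mul_le_mul_left ?_ ht
    linear_combination hle t ht
  have hbound : |c - a| + 1 ≤ c - a := by
    simpa only [div_mul_cancel₀ _ hgap.ne'] using
      linear_bound ((|c - a| + 1) / (b - d)) (by positivity)
  linarith [le_abs_self (c - a)]

section

variable {n : ℕ}

theorem l1_smul (t : ℝ) (x : Fin n → ℝ) : l1 (t • x) = |t| * l1 x := by
  simp [l1, abs_mul, Finset.mul_sum]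

theorem l2_nonneg (x : Fin n → ℝ) : 0 ≤ l2 x :=
  Real.sqrt_nonneg _

theorem l2_neg (x : Fin n → ℝ) : l2 (-x) = l2 x := by
  simp [l2]

theorem l2_smul (t : ℝ) (x : Fin n → ℝ) : l2 (t • x) = |t| * l2 x := by
  simp [l2, mul_pow, ← Finset.mul_sum, Real.sqrt_mul (sq_nonneg t), Real.sqrt_sq_eq_abs]

theorem sq_l2_smul (t : ℝ) (x : Fin n → ℝ) : l2 (t • x) ^ 2 = t ^ 2 * l2 x ^ 2 := by
  rw [l2_smul, mul_pow, sq_abs]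

theorem proj_add_proj_compl (S : Finset (Fin n)) (x : Fin n → ℝ) : proj S x + proj Sᶜ x = x := by
  ext i
  by_cases hi : i ∈ S <;> simp [proj, hi]

theorem isSparse_proj {k : ℕ} {S : Finset (Fin n)} (hS : S.card ≤ k) (x : Fin n → ℝ) :
    IsSparse k (proj S x) := by
  refine (Finset.card_le_card fun i hi ↦ ?_).trans hS
  by_contra hiS
  simp [proj, hiS] at hi

theorem IsSparse.smul {k : ℕ} {x : Fin n → ℝ} (hx : IsSparse k x) (t : ℝ) :
    IsSparse k (t • x) := by
  refine (Finset.card_le_card fun i hi ↦ ?_).trans hx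
  simp_all

theorem map_neg_proj_compl_eq_map_proj {M : Type*} [AddCommGroup M] [Module ℝ M]
    {A : (Fin n → ℝ) →ₗ[ℝ] M} {h : Fin n → ℝ} (hh : A h = 0) (S : Finset (Fin n)) :
    A (-proj Sᶜ h) = A (proj S h) := by
  rw [map_neg, neg_eq_iff_add_eq_zero, add_comm, ← map_add, proj_add_proj_compl, hh]

theorem stmt1_general {k : ℕ} {M : Type*} [AddCommGroup M] [Module ℝ M]
    (A : (Fin n → ℝ) →ₗ[ℝ] M) {f : (Fin n → ℝ) → ℝ}
    (hf : ∀ t : ℝ, 0 < t → ∀ x, f (t • x) = t * f x) {c : ℝ} (hc : 0 < c)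
    (hmin : ∀ x, IsSparse k x → ∀ z, A z = A x → f x + c * l2 x ^ 2 ≤ f z + c * l2 z ^ 2)
    {h : Fin n → ℝ} (hh : A h = 0) {Λ : Finset (Fin n)} (hΛ : Λ.card ≤ k) :
    l2 (proj Λ h) ≤ l2 (proj Λᶜ h) := by
  have scaled (t : ℝ) (ht : 0 < t) :
      t * f (proj Λ h) + t ^ 2 * (c * l2 (proj Λ h) ^ 2) ≤
        t * f (-proj Λᶜ h) + t ^ 2 * (c * l2 (proj Λᶜ h) ^ 2) := by
    have same_fiber : A (t • -proj Λᶜ h) = A (t • proj Λ h) := by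
      rw [map_smul, map_smul, map_neg_proj_compl_eq_map_proj hh]
    have hle := hmin _ ((isSparse_proj hΛ h).smul t) _ same_fiber
    simpa only [hf t ht, sq_l2_smul, l2_neg, mul_left_comm c] using hle
  have sq_le : l2 (proj Λ h) ^ 2 ≤ l2 (proj Λᶜ h) ^ 2 :=
    le_of_mul_le_mul_left (le_of_forall_pos_mul_add_sq_mul_le scaled) hc
  exact (sq_le_sq₀ (l2_nonneg _) (l2_nonneg _)).1 sq_le

end

/-- If every `k`-sparse vector minimizes the Elastic Net regularizer over its
own fiber of `A`, then for every `h` in the null space of `A` and every index set `Λ` with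
at most `k` elements, `‖h_Λ‖₂ ≤ ‖h_{Λᶜ}‖₂`. -/
theorem stmt1 (m n k : ℕ) (hm : 0 < m) (hn : 0 < n) (hk : 0 < k)
    (A : Matrix (Fin m) (Fin n) ℝ) (μ : ℝ) (hμ : μ ∈ Set.Ioo (0 : ℝ) 1)
    (hmin : ∀ x : Fin n → ℝ, IsSparse k x → ∀ z : Fin n → ℝ, A.mulVec z = A.mulVec x →
      μ * l1 x + (1 - μ) * (l2 x) ^ 2 ≤ μ * l1 z + (1 - μ) * (l2 z) ^ 2) :
    ∀ h : Fin n → ℝ, A.mulVec h = 0 → ∀ Λ : Finset (Fin n), Λ.card ≤ k →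
      l2 (proj Λ h) ≤ l2 (proj Λᶜ h) :=
  fun _ hh _ hΛ ↦ stmt1_general A.mulVecLin (f := fun x ↦ μ * l1 x)
    (fun t ht x ↦ by rw [l1_smul, abs_of_pos ht, mul_left_comm]) (sub_pos.2 hμ.2) hmin hh hΛ
end

section
/- Let y ∈ ℝᵐ and A ∈ ℝ^{m×n}, where each column a_j of A satisfies ‖a_j‖₂ = 1. Let μ ∈ (0,1] and λ > 0, and let x̂ be a minimizer over z ∈ ℝⁿ of λ‖y − Az‖₂² + (1−μ)‖z‖₁ + μ‖z‖₂. Suppose indices i and j satisfy x̂_i·x̂_j > 0. Then |x̂_i − x̂_j| ≤ (2λ/μ)·√(2(1 − a_iᵀa_j))·‖y‖₂·‖x̂‖₂. -/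
/-!
Write `T` for the linear map given by the design matrix. At a minimizer `x`, the objective is
differentiable in the direction `eᵢ` whenever `x i ≠ 0`, which gives
`(1 - μ) sign (x i) + μ x i / ‖x‖ = 2 λ ⟪y - T x, T eᵢ⟫`.
For two coordinates of the same sign the `ℓ¹` terms cancel on subtraction, so
`μ (x i - x j) = 2 λ ⟪y - T x, T eᵢ - T eⱼ⟫ ‖x‖`. Cauchy–Schwarz and `‖y - T x‖ ≤ ‖y‖`, obtained by
comparing `x` with `0`, finish the proof.
-/

open Set
open scoped InnerProductSpace

theorem sign_eq_sign_of_mul_pos {R : Type*} [Ring R] [LinearOrder R] [IsStrictOrderedRing R]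
    {a b : R} (h : 0 < a * b) : SignType.sign a = SignType.sign b := by
  rcases pos_and_pos_or_neg_and_neg_of_mul_pos h with ⟨ha, hb⟩ | ⟨ha, hb⟩ <;> simp [ha, hb]

section LineDerivatives

variable {E F G : Type*} [NormedAddCommGroup E] [InnerProductSpace ℝ E]
  [NormedAddCommGroup F] [InnerProductSpace ℝ F] [AddCommGroup G] [Module ℝ G]

theorem hasLineDerivAt_norm_sq_sub_map (y : F) (T : G →ₗ[ℝ] F) (x v : G) :
    HasLineDerivAt ℝ (fun z => ‖y - T z‖ ^ 2) (-(2 * ⟪y - T x, T v⟫_ℝ)) x v := by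
  have residual_line : HasDerivAt (fun t : ℝ => y - T (x + t • v)) (-T v) 0 := by
    simpa using (((hasDerivAt_id (0 : ℝ)).smul_const (T v)).const_add (T x)).const_sub y
  simpa [HasLineDerivAt] using residual_line.norm_sq

theorem hasLineDerivAt_norm {x : E} (hx : x ≠ 0) (v : E) :
    HasLineDerivAt ℝ (fun z => ‖z‖) (⟪x, v⟫_ℝ / ‖x‖) x v := by
  have line : HasDerivAt (fun t : ℝ => x + t • v) v 0 := by
    simpa using ((hasDerivAt_id (0 : ℝ)).smul_const v).const_add x
  have sqrt_norm_sq := line.norm_sq.sqrt (by simpa using hx)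
  simpa [HasLineDerivAt, mul_div_mul_left] using sqrt_norm_sq

theorem hasLineDerivAt_sum_abs {ι : Type*} [Fintype ι] {x v : EuclideanSpace ℝ ι}
    (hv : ∀ k, x k = 0 → v k = 0) :
    HasLineDerivAt ℝ (fun z : EuclideanSpace ℝ ι => ∑ k, |z k|)
      (∑ k, SignType.sign (x k) * v k) x v := by
  refine HasDerivAt.fun_sum fun k _ => ?_
  by_cases hxk : x k = 0
  · simpa [hxk, hv k hxk] using hasDerivAt_const (0 : ℝ) (0 : ℝ)
  · have line : HasDerivAt (fun t : ℝ => x k + t * v k) (v k) 0 := by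
      simpa using ((hasDerivAt_id (0 : ℝ)).mul_const (v k)).const_add (x k)
    exact (hasDerivAt_abs hxk).comp_of_eq 0 line (by simp)

end LineDerivatives

section Clot

variable {ι F : Type*} [Fintype ι] [NormedAddCommGroup F] [InnerProductSpace ℝ F]

/-- The CLOT norm `(1 - μ)‖z‖₁ + μ‖z‖₂`, the regularizer of the problem. It is defined for every
real `μ`, although it need not be a norm when `μ ∉ [0, 1]`. -/
noncomputable def clotNorm (μ : ℝ) (z : EuclideanSpace ℝ ι) : ℝ :=
  (1 - μ) * ∑ k, |z k| + μ * ‖z‖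

/-- The CLOT-regularized least-squares objective. The design matrix is encoded as a linear map `T`
into an arbitrary inner product space, with `T (EuclideanSpace.single i 1)` as its `i`-th column. -/
noncomputable def clotObjective (lam μ : ℝ) (y : F) (T : EuclideanSpace ℝ ι →ₗ[ℝ] F)
    (z : EuclideanSpace ℝ ι) : ℝ :=
  lam * ‖y - T z‖ ^ 2 + clotNorm μ z

variable {lam μ : ℝ} {y : F} {T : EuclideanSpace ℝ ι →ₗ[ℝ] F} {x v : EuclideanSpace ℝ ι}

theorem clotNorm_nonneg (hμ : μ ∈ Icc (0 : ℝ) 1) (z : EuclideanSpace ℝ ι) : 0 ≤ clotNorm μ z :=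
  add_nonneg (mul_nonneg (sub_nonneg.2 hμ.2) (Finset.sum_nonneg fun _ _ => abs_nonneg _))
    (mul_nonneg hμ.1 (norm_nonneg z))

theorem hasLineDerivAt_clotNorm (μ : ℝ) (hx : x ≠ 0) (hv : ∀ k, x k = 0 → v k = 0) :
    HasLineDerivAt ℝ (clotNorm μ)
      ((1 - μ) * ∑ k, SignType.sign (x k) * v k + μ * (⟪x, v⟫_ℝ / ‖x‖)) x v :=
  (HasDerivAt.const_mul (1 - μ) (hasLineDerivAt_sum_abs hv)).add
    (HasDerivAt.const_mul μ (hasLineDerivAt_norm hx v))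

theorem clotObjective_stationary (hmin : IsLocalMin (clotObjective lam μ y T) x)
    (hx : x ≠ 0) (hv : ∀ k, x k = 0 → v k = 0) :
    (1 - μ) * ∑ k, SignType.sign (x k) * v k + μ * (⟪x, v⟫_ℝ / ‖x‖) =
      2 * lam * ⟪y - T x, T v⟫_ℝ := by
  have deriv_eq_zero := hmin.hasLineDerivAt_eq_zero <|
    (HasDerivAt.const_mul lam (hasLineDerivAt_norm_sq_sub_map y T x v)).add
      (hasLineDerivAt_clotNorm μ hx hv)
  linarith

theorem clotObjective_stationary_single [DecidableEq ι]
    (hmin : IsLocalMin (clotObjective lam μ y T) x) {i : ι} (hi : x i ≠ 0) :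
    (1 - μ) * SignType.sign (x i) + μ * (x i / ‖x‖) =
      2 * lam * ⟪y - T x, T (EuclideanSpace.single i 1)⟫_ℝ := by
  have hx : x ≠ 0 := fun h => hi (by simp [h])
  have single_supported : ∀ k, x k = 0 → EuclideanSpace.single i (1 : ℝ) k = 0 := by
    intro k hk
    have hki : k ≠ i := fun h => hi (h ▸ hk)
    simp [hki]
  simpa [EuclideanSpace.inner_single_right, Pi.single_apply] using
    clotObjective_stationary hmin hx single_supported

theorem mul_sub_eq_inner_residual_mul_norm [DecidableEq ι]
    (hmin : IsLocalMin (clotObjective lam μ y T) x) {i j : ι} (hij : 0 < x i * x j) :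
    μ * (x i - x j) =
      2 * lam * ⟪y - T x, T (EuclideanSpace.single i 1) - T (EuclideanSpace.single j 1)⟫_ℝ *
        ‖x‖ := by
  have hi : x i ≠ 0 := left_ne_zero_of_mul hij.ne'
  have hj : x j ≠ 0 := right_ne_zero_of_mul hij.ne'
  have hx : ‖x‖ ≠ 0 := norm_ne_zero_iff.2 fun h => hi (by simp [h])
  have stationary_i := clotObjective_stationary_single hmin hi
  have stationary_j := clotObjective_stationary_single hmin hj
  rw [← sign_eq_sign_of_mul_pos hij] at stationary_j
  calc μ * (x i - x j) = (μ * (x i / ‖x‖) - μ * (x j / ‖x‖)) * ‖x‖ := by field_simp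
    _ = _ := by rw [inner_sub_right]; congr 1; linarith

theorem norm_residual_le_of_isMinOn (hlam : 0 < lam) (hμ : μ ∈ Icc (0 : ℝ) 1)
    (hmin : IsMinOn (clotObjective lam μ y T) univ x) : ‖y - T x‖ ≤ ‖y‖ := by
  have le_at_zero : lam * ‖y - T x‖ ^ 2 + clotNorm μ x ≤ lam * ‖y‖ ^ 2 := by
    simpa [clotObjective, clotNorm] using hmin (mem_univ 0)
  have sq_le : lam * ‖y - T x‖ ^ 2 ≤ lam * ‖y‖ ^ 2 := by
    linarith [clotNorm_nonneg hμ x]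
  exact (sq_le_sq₀ (norm_nonneg _) (norm_nonneg _)).1 (le_of_mul_le_mul_left sq_le hlam)

theorem stmt4_general [DecidableEq ι] (hμ : μ ∈ Ioc (0 : ℝ) 1) (hlam : 0 < lam)
    (hmin : IsMinOn (clotObjective lam μ y T) univ x) {i j : ι} (hij : 0 < x i * x j) :
    |x i - x j| ≤ 2 * lam / μ *
      ‖T (EuclideanSpace.single i 1) - T (EuclideanSpace.single j 1)‖ * ‖y‖ * ‖x‖ := by
  set d := T (EuclideanSpace.single i 1) - T (EuclideanSpace.single j 1)
  have hμ0 : 0 < μ := hμ.1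
  have sub_eq : x i - x j = 2 * lam / μ * ⟪y - T x, d⟫_ℝ * ‖x‖ := by
    have := mul_sub_eq_inner_residual_mul_norm (hmin.isLocalMin Filter.univ_mem) hij
    field_simp
    linarith
  have inner_le : |⟪y - T x, d⟫_ℝ| ≤ ‖d‖ * ‖y‖ :=
    calc |⟪y - T x, d⟫_ℝ| ≤ ‖y - T x‖ * ‖d‖ := abs_real_inner_le_norm _ _
      _ ≤ ‖y‖ * ‖d‖ := by
        gcongr
        exact norm_residual_le_of_isMinOn hlam (Ioc_subset_Icc_self hμ) hmin
      _ = ‖d‖ * ‖y‖ := mul_comm _ _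
  calc |x i - x j| = 2 * lam / μ * |⟪y - T x, d⟫_ℝ| * ‖x‖ := by
        rw [sub_eq, abs_mul, abs_mul, abs_of_pos (by positivity), abs_norm]
    _ ≤ 2 * lam / μ * (‖d‖ * ‖y‖) * ‖x‖ := by gcongr
    _ = 2 * lam / μ * ‖d‖ * ‖y‖ * ‖x‖ := by ring

end Clot

theorem norm_sub_eq_sqrt_of_norm_eq_one {F : Type*} [NormedAddCommGroup F]
    [InnerProductSpace ℝ F] {a b : F} (ha : ‖a‖ = 1) (hb : ‖b‖ = 1) :
    ‖a - b‖ = √(2 * (1 - ⟪a, b⟫_ℝ)) := by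
  rw [← Real.sqrt_sq (norm_nonneg (a - b)), norm_sub_sq_real, ha, hb]
  congr 1
  ring

theorem l2_eq_norm_toLp {n : ℕ} (x : Fin n → ℝ) : l2 x = ‖WithLp.toLp 2 x‖ := by
  simp [l2, EuclideanSpace.norm_eq]

theorem clotObjective_toLp {m n : ℕ} (lam μ : ℝ) (y : Fin m → ℝ) (A : Matrix (Fin m) (Fin n) ℝ)
    (z : Fin n → ℝ) :
    clotObjective lam μ (WithLp.toLp 2 y) A.toEuclideanLin (WithLp.toLp 2 z) =
      lam * l2 (y - A.mulVec z) ^ 2 + ((1 - μ) * l1 z + μ * l2 z) := by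
  simp [clotObjective, clotNorm, l1, l2_eq_norm_toLp]

theorem norm_toEuclideanLin_single_sub_single {m n : ℕ} (A : Matrix (Fin m) (Fin n) ℝ)
    {i j : Fin n} (hi : l2 (fun r => A r i) = 1) (hj : l2 (fun r => A r j) = 1) :
    ‖A.toEuclideanLin (EuclideanSpace.single i 1) -
        A.toEuclideanLin (EuclideanSpace.single j 1)‖ = √(2 * (1 - ∑ r, A r i * A r j)) := by
  have map_single (k : Fin n) : A.toEuclideanLin (EuclideanSpace.single k 1) =
      WithLp.toLp 2 fun r => A r k := by
    ext r
    simp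
  rw [l2_eq_norm_toLp] at hi hj
  rw [map_single, map_single, norm_sub_eq_sqrt_of_norm_eq_one hi hj]
  simp [PiLp.inner_apply, mul_comm]

/-- Grouping effect for the CLOT formulation. -/
theorem stmt4 (m n : ℕ) (y : Fin m → ℝ) (A : Matrix (Fin m) (Fin n) ℝ)
    (hcols : ∀ j : Fin n, l2 (fun i => A i j) = 1)
    (μ : ℝ) (hμ : μ ∈ Set.Ioc (0 : ℝ) 1)
    (lam : ℝ) (hlam : 0 < lam)
    (xh : Fin n → ℝ)
    (hmin : ∀ z : Fin n → ℝ,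
      lam * (l2 (y - A.mulVec xh)) ^ 2 + ((1 - μ) * l1 xh + μ * l2 xh) ≤
        lam * (l2 (y - A.mulVec z)) ^ 2 + ((1 - μ) * l1 z + μ * l2 z))
    (i j : Fin n) (hprod : 0 < xh i * xh j) :
    |xh i - xh j| ≤ (2 * lam / μ) * Real.sqrt (2 * (1 - ∑ r, A r i * A r j)) *
      l2 y * l2 xh := by
  have isMinOn_toLp : IsMinOn (clotObjective lam μ (WithLp.toLp 2 y) A.toEuclideanLin) univ
      (WithLp.toLp 2 xh) := fun z _ => by
    simpa only [mem_ofPred_eq, ← clotObjective_toLp] using hmin z.ofLp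
  rw [← norm_toEuclideanLin_single_sub_single A (hcols i) (hcols j), l2_eq_norm_toLp,
    l2_eq_norm_toLp]
  exact stmt4_general hμ hlam isMinOn_toLp hprod
end
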